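/- The Artin constant A = ∏_{p prime} (1 - 1/(p(p-1))) converges to a positive real number, and 0.373 < A < 0.374. -/

import Mathlib

def artinIsP (n : ℕ) : Bool :=
  Nat.ble 2 n && (List.range' 2 35).all (fun d => Nat.ble n d || !(Nat.beq (n % d) 0))

def artinNum : ℕ → ℕ
  | 0 => 1
  | n + 1 => bif artinIsP n then artinNum n * (n * (n - 1) - 1) else artinNum n

def artinDen : ℕ → ℕ
  | 0 => 1
  | n + 1 => bif artinIsP n then artinDen n * (n * (n - 1)) else artinDen n

theorem artinIsP_iff (n : ℕ) (hn : n < 1369) : artinIsP n = true ↔ n.Prime := by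
  have key : artinIsP n = true ↔ 2 ≤ n ∧ ∀ d, 2 ≤ d → d < 37 → n ≤ d ∨ n % d ≠ 0 := by
    simp only [artinIsP, Bool.and_eq_true, List.all_eq_true, List.mem_range'_1, Bool.or_eq_true,
      Nat.ble_eq, Bool.not_eq_true', and_imp]
    refine and_congr Iff.rfl (forall_congr' fun d => forall_congr' fun _ => forall_congr' fun _ =>
      or_congr Iff.rfl ?_)
    rw [← Bool.not_eq_true, Nat.beq_eq]
  rw [key]
  constructor
  · rintro ⟨h2, h⟩
    by_contra hp
    have h1 := Nat.minFac_sq_le_self (by omega) hp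
    have h3 := (Nat.minFac_prime (by omega : n ≠ 1)).two_le
    have h4 : n.minFac < 37 := by nlinarith
    rcases h _ h3 h4 with h5 | h5
    · nlinarith
    · exact h5 (Nat.mod_eq_zero_of_dvd (Nat.minFac_dvd n))
  · intro hp
    refine ⟨hp.two_le, fun d hd _ => ?_⟩
    by_contra! hc
    rcases (Nat.dvd_prime hp).1 (Nat.dvd_of_mod_eq_zero hc.2) with h | h <;> omega

noncomputable def artinF (n : ℕ) : ℝ := 1 - 1 / ((n : ℝ) * ((n : ℝ) - 1))

open Classical in
noncomputable def artinG (n : ℕ) : ℝ := if n.Prime then artinF n else 1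

theorem artinG_le (n : ℕ) : artinG n ≤ 1 := by
  unfold artinG artinF
  split_ifs with h
  · have : (2 : ℝ) ≤ n := by exact_mod_cast h.two_le
    have : 0 < (n : ℝ) * ((n : ℝ) - 1) := by nlinarith
    have := one_div_pos.2 this
    linarith
  · exact le_rfl

theorem artinG_ge (n : ℕ) (hn : 2 ≤ n) : 1 - 1 / ((n : ℝ) * ((n : ℝ) - 1)) ≤ artinG n := by
  unfold artinG artinF
  split_ifs with h
  · exact le_rfl
  · have : (2 : ℝ) ≤ n := by exact_mod_cast hn
    have : 0 < (n : ℝ) * ((n : ℝ) - 1) := by nlinarith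
    have := one_div_pos.2 this
    linarith

theorem artinG_nonneg (n : ℕ) : 0 ≤ artinG n := by
  by_cases h : n.Prime
  · refine le_trans ?_ (artinG_ge n h.two_le)
    have : (2 : ℝ) ≤ n := by exact_mod_cast h.two_le
    have h1 : 1 ≤ (n : ℝ) * ((n : ℝ) - 1) := by nlinarith
    rw [sub_nonneg, div_le_one (by linarith)]
    exact h1
  · simp [artinG, h]

noncomputable def artinP (n : ℕ) : ℝ := ∏ i ∈ Finset.range n, artinG i

theorem artinP_nonneg (n : ℕ) : 0 ≤ artinP n := Finset.prod_nonneg fun i _ => artinG_nonneg i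

theorem artinP_le_one (n : ℕ) : artinP n ≤ 1 :=
  Finset.prod_le_one (fun i _ => artinG_nonneg i) fun i _ => artinG_le i

theorem artinP_succ (n : ℕ) : artinP (n + 1) = artinP n * artinG n := Finset.prod_range_succ _ _

theorem artinP_anti : Antitone artinP := antitone_nat_of_succ_le fun n => by
  rw [artinP_succ]
  exact mul_le_of_le_one_right (artinP_nonneg n) (artinG_le n)

theorem artinDen_pos (n : ℕ) (hn : n ≤ 1369) : 0 < artinDen n := by
  induction n with
  | zero => simp [artinDen]
  | succ n ih =>
    have ih := ih (by omega)
    rw [artinDen]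
    cases h : artinIsP n
    · simpa using ih
    · have := ((artinIsP_iff n (by omega)).1 h).two_le
      have h1 : 0 < n - 1 := by omega
      simp only [cond_true]
      positivity

theorem artinP_eq (n : ℕ) (hn : n ≤ 1369) : artinP n * artinDen n = artinNum n := by
  induction n with
  | zero => simp [artinDen, artinNum, artinP]
  | succ n ih =>
    have ih := ih (by omega)
    rw [artinDen, artinNum, artinP_succ]
    cases h : artinIsP n
    · have hp : ¬ n.Prime := fun hp => by simp [(artinIsP_iff n (by omega)).2 hp] at h
      simpa [artinG, hp] using ih
    · have hp := (artinIsP_iff n (by omega)).1 h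
      obtain ⟨m, rfl⟩ : ∃ m, n = m + 2 := ⟨n - 2, by have := hp.two_le; omega⟩
      have e : (m + 2) * (m + 2 - 1) - 1 = m * m + 3 * m + 1 := by
        rw [show m + 2 - 1 = m + 1 by omega]
        have : (m + 2) * (m + 1) = m * m + 3 * m + 1 + 1 := by ring
        omega
      simp only [cond_true, e, artinG, hp, if_true, artinF]
      push_cast [show m + 2 - 1 = m + 1 by omega]
      rw [← ih]
      have h1 : ((m : ℝ) + 2) ≠ 0 := by positivity
      have h2 : ((m : ℝ) + 2 - 1) ≠ 0 := by
        have : (0 : ℝ) ≤ m := Nat.cast_nonneg m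
        linarith
      field_simp
      ring

set_option maxRecDepth 100000 in
theorem artin_compute :
    (Nat.ble (37385 * artinDen 1367) (100000 * artinNum 1367) &&
      Nat.ble (1000000 * artinNum 1367 + 1) (373999 * artinDen 1367)) = true := by
  decide +kernel

theorem artinP_bounds : 0.37385 ≤ artinP 1367 ∧ artinP 1367 ≤ 0.373999 := by
  have h := artin_compute
  rw [Bool.and_eq_true, Nat.ble_eq, Nat.ble_eq] at h
  generalize hN : (1367 : ℕ) = N at h ⊢
  have hd : (0 : ℝ) < artinDen N := by exact_mod_cast artinDen_pos N (by omega)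
  have he := artinP_eq N (by omega)
  have h1 : (37385 : ℝ) * artinDen N ≤ 100000 * artinNum N := by exact_mod_cast h.1
  have h2 : (1000000 : ℝ) * artinNum N + 1 ≤ 373999 * artinDen N := by exact_mod_cast h.2
  rw [← he] at h1 h2
  constructor
  · by_contra! hc
    have := mul_lt_mul_of_pos_right hc hd
    linarith
  · by_contra! hc
    have := mul_lt_mul_of_pos_right hc hd
    linarith

theorem artinP_lower (k : ℕ) :
    0.37385 - 1 / 1366 + 1 / ((k : ℝ) + 1366) ≤ artinP (1367 + k) := by
  induction k with
  | zero => have := artinP_bounds.1; norm_num at this ⊢; linarith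
  | succ k ih =>
    rw [← add_assoc, artinP_succ]
    have h1 := artinG_ge (1367 + k) (by omega)
    have h2 := artinP_le_one (1367 + k)
    have h3 := artinP_nonneg (1367 + k)
    push_cast at h1 ⊢
    have hk : (0 : ℝ) ≤ k := Nat.cast_nonneg k
    have e : 1 / ((1367 + (k : ℝ)) * (1367 + (k : ℝ) - 1))
        = 1 / ((k : ℝ) + 1366) - 1 / ((k : ℝ) + 1 + 1366) := by
      have : (1367 + (k : ℝ) - 1) ≠ 0 := by linarith
      field_simp
      ring
    have h0 : 0 ≤ 1 / ((1367 + (k : ℝ)) * (1367 + (k : ℝ) - 1)) := by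
      apply one_div_nonneg.2; nlinarith
    have h4 := mul_le_mul_of_nonneg_left h1 h3
    have h5 := mul_le_mul_of_nonneg_right h2 h0
    linarith

theorem artin_multipliable :
    Multipliable (fun p : {p : ℕ // p.Prime} => (1 - 1 / ((p.1 : ℝ) * ((p.1 : ℝ) - 1)))) := by
  have hs : Summable (fun n : ℕ => 2 * (1 / (n : ℝ) ^ 2)) :=
    (Real.summable_one_div_nat_pow.2 (by norm_num)).mul_left 2
  have hs' := hs.comp_injective (Subtype.val_injective (p := Nat.Prime))
  have : Summable (fun p : {p : ℕ // p.Prime} => ‖-(1 / ((p.1 : ℝ) * ((p.1 : ℝ) - 1)))‖) := by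
    refine Summable.of_nonneg_of_le (fun _ => norm_nonneg _) (fun p => ?_) hs'
    have h2 : (2 : ℝ) ≤ p.1 := by exact_mod_cast p.2.two_le
    have h3 : 0 < (p.1 : ℝ) * ((p.1 : ℝ) - 1) := by nlinarith
    rw [norm_neg, Real.norm_of_nonneg (one_div_pos.2 h3).le]
    simp only [Function.comp]
    rw [mul_one_div, div_le_div_iff₀ h3 (by positivity)]
    nlinarith
  have := multipliable_one_add_of_summable this
  simpa only [← sub_eq_add_neg] using this

theorem artin_tendsto : Filter.Tendsto artinP Filter.atTop
    (nhds (∏' p : {p : ℕ // p.Prime}, (1 - 1 / ((p.1 : ℝ) * ((p.1 : ℝ) - 1))))) := by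
  have h := artin_multipliable.hasProd
  have h' : HasProd (artinF ∘ (Subtype.val : {p : ℕ | p.Prime} → ℕ))
    (∏' p : {p : ℕ // p.Prime}, (1 - 1 / ((p.1 : ℝ) * ((p.1 : ℝ) - 1)))) := h
  rw [hasProd_subtype_iff_mulIndicator] at h'
  have e : Set.mulIndicator {p : ℕ | p.Prime} artinF = artinG := by
    funext n
    simp [Set.mulIndicator, artinG]
  rw [e] at h'
  exact h'.tendsto_prod_nat

theorem artin_limit_le {A : ℝ} (ht : Filter.Tendsto artinP Filter.atTop (nhds A)) (n : ℕ) :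
    A ≤ artinP n := artinP_anti.le_of_tendsto ht n

theorem stmt_10 :
    Multipliable (fun p : {p : ℕ // p.Prime} => (1 - 1 / ((p.1 : ℝ) * ((p.1 : ℝ) - 1)))) ∧
    0 < ∏' p : {p : ℕ // p.Prime}, (1 - 1 / ((p.1 : ℝ) * ((p.1 : ℝ) - 1))) ∧
    0.373 < ∏' p : {p : ℕ // p.Prime}, (1 - 1 / ((p.1 : ℝ) * ((p.1 : ℝ) - 1))) ∧
    (∏' p : {p : ℕ // p.Prime}, (1 - 1 / ((p.1 : ℝ) * ((p.1 : ℝ) - 1)))) < 0.374 := by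
  have ht := artin_tendsto
  refine ⟨artin_multipliable, ?_⟩
  generalize (∏' p : {p : ℕ // p.Prime}, (1 - 1 / ((p.1 : ℝ) * ((p.1 : ℝ) - 1)))) = A at ht ⊢
  have hu : A ≤ artinP 1367 := artin_limit_le ht _
  have hl : 0.37385 - 1 / 1366 ≤ A := by
    refine ge_of_tendsto ht (Filter.eventually_atTop.2 ⟨1367, fun n hn => ?_⟩)
    obtain ⟨k, hk⟩ := Nat.exists_eq_add_of_le hn
    have h1 := artinP_lower k
    rw [← hk] at h1
    have h2 : 0 ≤ 1 / ((k : ℝ) + 1366) :=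
      one_div_nonneg.2 (add_nonneg (Nat.cast_nonneg k) (by norm_num))
    linarith
  have hb := hu.trans artinP_bounds.2
  norm_num at hl hb ⊢
  refine ⟨?_, ?_, ?_⟩ <;> linarith
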